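/- Let μ be a probability measure on Ω, X : Ω → ℝ a bounded measurable function, and α ∈ (0,1). With q the lower α-quantile of X, ε the associated atom weight, and Z* := (1/α)(1_{X < q} + ε · 1_{X = q}), the extreme expected loss equals the tail average of quantiles: ∫ (−X) · Z* dμ = (1/α) ∫_{(0,α)} ( − q⁻_u(X) ) du, where the integral on the right is with respect to Lebesgue measure in u and q⁻_u(X) := sInf {s ∈ ℝ | μ{X ≤ s} ≥ u} is the lower u-quantile of X. -/

import Mathlib

open MeasureTheory

/-
For `0 < u`, the lower quantile and the distribution function of `ν` form a Galois connection,
`q⁻_u ≤ s ↔ u ≤ ν (-∞, s]`. Hence under Lebesgue measure on `(0, α]` the event `q⁻_u ≤ s` has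
measure `min α (ν (-∞, s])`. The part of `ν` below `q = q⁻_α`, topped up to total mass `α` by an
atom at `q`, has the same distribution function, so the two laws coincide, and the tail average of
quantiles becomes an integral against that part of `ν`, i.e. against the density `α Z*`.
-/

open Filter Set Topology

section Continuity

variable {β : Type*} [TopologicalSpace β] [LinearOrder β] [OrderTopology β] [MeasurableSpace β]

theorem tendsto_measure_Iic_atBot [OpensMeasurableSpace β] [NoMinOrder β] [Nonempty β]
    [(atBot : Filter β).IsCountablyGenerated] (ν : Measure β) [IsFiniteMeasure ν] :
    Tendsto (fun s => ν (Iic s)) atBot (𝓝 0) := by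
  have hinter : ⋂ s : β, Iic s = ∅ := iInter_Iic_eq_empty_iff.2 (by simp [not_bddBelow_univ])
  simpa only [hinter, measure_empty] using! tendsto_measure_iInter_atBot (μ := ν)
    (fun _ : β => measurableSet_Iic.nullMeasurableSet) monotone_Iic
    ⟨Classical.arbitrary β, measure_ne_top ν _⟩

theorem tendsto_measure_Iic_nhdsGT [OpensMeasurableSpace β] [DenselyOrdered β] [NoMaxOrder β]
    [FirstCountableTopology β] (ν : Measure β) [IsFiniteMeasure ν] (a : β) :
    Tendsto (fun s => ν (Iic s)) (𝓝[>] a) (𝓝 (ν (Iic a))) := by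
  have hinter : ⋂ r > a, Iic r = Iic a := by
    ext x
    simpa only [mem_iInter, mem_Iic] using
      ⟨le_of_forall_gt_imp_ge_of_dense, fun hxa r hr => hxa.trans hr.le⟩
  obtain ⟨b, hb⟩ := exists_gt a
  simpa only [hinter] using! tendsto_measure_biInter_gt (μ := ν) (s := Iic) (a := a)
    (fun _ _ => measurableSet_Iic.nullMeasurableSet) (fun _ _ _ => Iic_subset_Iic.2)
    ⟨b, hb, measure_ne_top ν _⟩

theorem measure_Iio_le_of_forall_lt [DenselyOrdered β] [NoMinOrder β] [FirstCountableTopology β]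
    {ν : Measure β} {a : β} {c : ENNReal} (h : ∀ s < a, ν (Iic s) ≤ c) : ν (Iio a) ≤ c := by
  obtain ⟨t, htmono, ht, hta⟩ := exists_seq_strictMono_tendsto a
  have hunion : ⋃ n, Iic (t n) = Iio a := by
    rw [← biUnion_range, (isLUB_of_tendsto_atTop htmono.monotone hta).biUnion_Iic_eq_Iio]
    rintro ⟨n, hn⟩
    exact (ht n).ne hn
  have hmono : Monotone fun n => Iic (t n) := monotone_Iic.comp htmono.monotone
  rw [← hunion, hmono.measure_iUnion]
  exact iSup_le fun n => h _ (ht n)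

end Continuity

/-- The lower `u`-quantile `q⁻_u` of a measure `ν` on the line, to be applied to the law of a random
variable. It has the junk value `0` when `u ≤ 0` and when no `s` satisfies `u ≤ ν (-∞, s]`. -/
noncomputable def lowerQuantile (ν : Measure ℝ) (u : ℝ) : ℝ := sInf {s | u ≤ ν.real (Iic s)}

/-- The lower tail of mass `α` of a measure `ν` on the line: all of `ν` strictly below its lower
`α`-quantile, together with an atom at the quantile carrying the remaining mass. -/
noncomputable def lowerTail (ν : Measure ℝ) (α : ℝ) : Measure ℝ :=
  ν.restrict (Iio (lowerQuantile ν α)) +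
    ENNReal.ofReal (α - ν.real (Iio (lowerQuantile ν α))) • Measure.dirac (lowerQuantile ν α)

section Quantile

variable {ν : Measure ℝ} [IsFiniteMeasure ν] {u α : ℝ}

theorem bddBelow_setOf_le_measureReal_Iic (hu : 0 < u) : BddBelow {s | u ≤ ν.real (Iic s)} := by
  have hzero : Tendsto (fun s => ν.real (Iic s)) atBot (𝓝 0) :=
    (ENNReal.tendsto_toReal_zero_iff fun _ => measure_ne_top ν _).2 (tendsto_measure_Iic_atBot ν)
  obtain ⟨m, hm⟩ := (hzero.eventually_lt_const hu).exists
  refine ⟨m, fun s (hs : u ≤ ν.real (Iic s)) => ?_⟩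
  by_contra! hsm
  exact (hs.trans (measureReal_mono (Iic_subset_Iic.2 hsm.le))).not_gt hm

theorem le_measureReal_Iic_lowerQuantile (hu : 0 < u) (hne : ∃ s, u ≤ ν.real (Iic s)) :
    u ≤ ν.real (Iic (lowerQuantile ν u)) := by
  have hright : Tendsto (fun s => ν.real (Iic s)) (𝓝[>] lowerQuantile ν u)
      (𝓝 (ν.real (Iic (lowerQuantile ν u)))) :=
    (ENNReal.tendsto_toReal (measure_ne_top ν _)).comp (tendsto_measure_Iic_nhdsGT ν _)
  refine ge_of_tendsto hright ?_
  filter_upwards [self_mem_nhdsWithin] with s hs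
  obtain ⟨t, ht, hts⟩ := (csInf_lt_iff (bddBelow_setOf_le_measureReal_Iic hu) hne).1 hs
  exact ht.trans (measureReal_mono (Iic_subset_Iic.2 hts.le))

theorem lowerQuantile_le_iff (hu : 0 < u) (hne : ∃ s, u ≤ ν.real (Iic s)) {s : ℝ} :
    lowerQuantile ν u ≤ s ↔ u ≤ ν.real (Iic s) :=
  ⟨fun h => (le_measureReal_Iic_lowerQuantile hu hne).trans
      (measureReal_mono (Iic_subset_Iic.2 h)),
    fun h => csInf_le (bddBelow_setOf_le_measureReal_Iic hu) h⟩

theorem monotoneOn_lowerQuantile (hα : ∃ s, α ≤ ν.real (Iic s)) :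
    MonotoneOn (lowerQuantile ν) (Ioc 0 α) := fun _ hu _ hv huv =>
  csInf_le_csInf (bddBelow_setOf_le_measureReal_Iic hu.1) (hα.imp fun _ => hv.2.trans)
    fun _ => huv.trans

theorem measureReal_Iio_lowerQuantile_le (hα₀ : 0 < α) (hα : ∃ s, α ≤ ν.real (Iic s)) :
    ν.real (Iio (lowerQuantile ν α)) ≤ α := by
  refine ENNReal.toReal_le_of_le_ofReal hα₀.le (measure_Iio_le_of_forall_lt fun s hs => ?_)
  have hlt : ν.real (Iic s) < α := not_le.1 fun h => ((lowerQuantile_le_iff hα₀ hα).2 h).not_gt hs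
  exact (ENNReal.le_ofReal_iff_toReal_le (measure_ne_top ν _) hα₀.le).2 hlt.le

theorem sub_div_mul_measureReal_singleton_lowerQuantile (hα₀ : 0 < α)
    (hα : ∃ s, α ≤ ν.real (Iic s)) :
    (α - ν.real (Iio (lowerQuantile ν α))) / ν.real {lowerQuantile ν α}
      * ν.real {lowerQuantile ν α} = α - ν.real (Iio (lowerQuantile ν α)) := by
  refine div_mul_cancel_of_imp fun hatom => ?_
  have hsplit : ν.real (Iic (lowerQuantile ν α))
      = ν.real (Iio (lowerQuantile ν α)) + ν.real {lowerQuantile ν α} := by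
    rw [← Iio_union_right, measureReal_union (by simp) (measurableSet_singleton _)]
  linarith [le_measureReal_Iic_lowerQuantile hα₀ hα, measureReal_Iio_lowerQuantile_le hα₀ hα]

theorem lowerTail_Iic (hα₀ : 0 < α) (hα : ∃ s, α ≤ ν.real (Iic s)) (s : ℝ) :
    lowerTail ν α (Iic s) = ENNReal.ofReal (min α (ν.real (Iic s))) := by
  have hiff : lowerQuantile ν α ≤ s ↔ α ≤ ν.real (Iic s) := lowerQuantile_le_iff hα₀ hα
  simp only [lowerTail, Measure.add_apply, Measure.smul_apply, smul_eq_mul,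
    Measure.restrict_apply measurableSet_Iic, Measure.dirac_apply' _ measurableSet_Iic]
  rcases lt_or_ge s (lowerQuantile ν α) with hs | hs
  · have hinter : Iic s ∩ Iio (lowerQuantile ν α) = Iic s :=
      inter_eq_left.2 (Iic_subset_Iio.2 hs)
    rw [hinter, min_eq_right (not_le.1 fun h => (hiff.2 h).not_gt hs).le, ofReal_measureReal]
    simp [hs]
  · have hinter : Iic s ∩ Iio (lowerQuantile ν α) = Iio (lowerQuantile ν α) :=
      inter_eq_right.2 (Iio_subset_Iic_iff.2 hs)
    rw [hinter, min_eq_left (hiff.1 hs), indicator_of_mem (mem_Iic.2 hs), Pi.one_apply, mul_one,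
      ← ofReal_measureReal, ← ENNReal.ofReal_add measureReal_nonneg
        (sub_nonneg.2 (measureReal_Iio_lowerQuantile_le hα₀ hα)), add_sub_cancel]

theorem map_lowerQuantile_volume_Ioc (hα₀ : 0 < α) (hα : ∃ s, α ≤ ν.real (Iic s)) :
    (volume.restrict (Ioc 0 α)).map (lowerQuantile ν) = lowerTail ν α := by
  refine Measure.ext_of_Iic _ _ fun s => ?_
  have hpre : lowerQuantile ν ⁻¹' Iic s ∩ Ioc 0 α = Ioc 0 (min α (ν.real (Iic s))) := by
    ext u
    have hiff (hu : u ∈ Ioc 0 α) : lowerQuantile ν u ≤ s ↔ u ≤ ν.real (Iic s) :=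
      lowerQuantile_le_iff hu.1 (hα.imp fun _ => hu.2.trans)
    simp only [mem_inter_iff, mem_preimage, mem_Iic, mem_Ioc, le_min_iff] at hiff ⊢
    tauto
  rw [Measure.map_apply_of_aemeasurable (aemeasurable_restrict_of_monotoneOn measurableSet_Ioc
      (monotoneOn_lowerQuantile hα)) measurableSet_Iic,
    Measure.restrict_apply' measurableSet_Ioc, hpre, Real.volume_Ioc, sub_zero,
    lowerTail_Iic hα₀ hα]

variable {E : Type*} [NormedAddCommGroup E] [NormedSpace ℝ E] [CompleteSpace E]

theorem setIntegral_comp_lowerQuantile (hα₀ : 0 < α) (hα : ∃ s, α ≤ ν.real (Iic s)) {g : ℝ → E}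
    (hg : IntegrableOn g (Iio (lowerQuantile ν α)) ν) :
    ∫ u in Ioc 0 α, g (lowerQuantile ν u)
      = ∫ x in Iio (lowerQuantile ν α), g x ∂ν
        + (α - ν.real (Iio (lowerQuantile ν α))) • g (lowerQuantile ν α) := by
  have hatom : Integrable g (ENNReal.ofReal (α - ν.real (Iio (lowerQuantile ν α)))
      • Measure.dirac (lowerQuantile ν α)) :=
    (integrable_dirac enorm_lt_top).smul_measure ENNReal.ofReal_ne_top
  have hlaw := map_lowerQuantile_volume_Ioc hα₀ hα
  have hmeas : AEStronglyMeasurable g ((volume.restrict (Ioc 0 α)).map (lowerQuantile ν)) :=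
    hlaw ▸ (hg.integrable.add_measure hatom).aestronglyMeasurable
  rw [← integral_map (aemeasurable_restrict_of_monotoneOn measurableSet_Ioc
      (monotoneOn_lowerQuantile hα)) hmeas, hlaw, lowerTail, integral_add_measure hg hatom,
    integral_smul_measure, integral_dirac,
    ENNReal.toReal_ofReal (sub_nonneg.2 (measureReal_Iio_lowerQuantile_le hα₀ hα))]

end Quantile

section RandomVariable

variable {Ω : Type*} [MeasurableSpace Ω] {μ : Measure Ω} [IsFiniteMeasure μ] {X : Ω → ℝ}

theorem integrableOn_setOf_lt_of_integrable_negPart (hX : AEMeasurable X μ)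
    (hXneg : Integrable (fun ω => (X ω)⁻) μ) (a : ℝ) : IntegrableOn X {ω | X ω < a} μ := by
  refine (hXneg.restrict.add (integrable_const |a|)).mono' hX.restrict.aestronglyMeasurable ?_
  filter_upwards [ae_restrict_mem₀ (nullMeasurableSet_lt hX aemeasurable_const)]
    with ω (hω : X ω < a)
  change |X ω| ≤ (X ω)⁻ + |a|
  rcases le_total 0 (X ω) with h | h
  · rw [negPart_eq_zero.2 h, zero_add]
    exact abs_le_abs_of_nonneg h hω.le
  · rw [negPart_eq_neg.2 h, abs_of_nonpos h]
    exact le_add_of_nonneg_right (abs_nonneg a)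

theorem integral_mul_indicator_lt_add_indicator_eq {a : ℝ} (hX : AEMeasurable X μ)
    (hXa : IntegrableOn X {ω | X ω < a} μ) (c : ℝ) :
    ∫ ω, X ω * ({ω | X ω < a}.indicator 1 ω + c * {ω | X ω = a}.indicator 1 ω) ∂μ
      = ∫ ω in {ω | X ω < a}, X ω ∂μ + c * μ.real {ω | X ω = a} * a := by
  have hlt : NullMeasurableSet {ω | X ω < a} μ := nullMeasurableSet_lt hX aemeasurable_const
  have heq : NullMeasurableSet {ω | X ω = a} μ := hX.nullMeasurable (measurableSet_singleton a)
  have hpoint (ω : Ω) : X ω * ({ω | X ω < a}.indicator 1 ω + c * {ω | X ω = a}.indicator 1 ω)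
      = {ω | X ω < a}.indicator X ω + {ω | X ω = a}.indicator (fun _ => c * a) ω := by
    rcases lt_trichotomy (X ω) a with h | h | h
    · simp [h, h.ne]
    · simp [h, mul_comm]
    · simp [h.not_gt, h.ne']
  simp_rw [hpoint]
  rw [integral_add (hXa.integrable_indicator₀ hlt) ((integrable_const _).indicator₀ heq),
    integral_indicator₀ hlt, integral_indicator₀ heq, setIntegral_const, smul_eq_mul]
  ring

theorem setIntegral_lowerQuantile_map {α : ℝ} (hX : AEMeasurable X μ)
    (hα₀ : 0 < α) (hα : ∃ s, α ≤ (μ.map X).real (Iic s))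
    (hXa : IntegrableOn X {ω | X ω < lowerQuantile (μ.map X) α} μ) :
    ∫ u in Ioc 0 α, lowerQuantile (μ.map X) u
      = ∫ ω in {ω | X ω < lowerQuantile (μ.map X) α}, X ω ∂μ
        + (α - μ.real {ω | X ω < lowerQuantile (μ.map X) α}) * lowerQuantile (μ.map X) α := by
  have hid {m : Measure ℝ} : AEStronglyMeasurable (fun x : ℝ => x) m := aestronglyMeasurable_id
  have htail : IntegrableOn (fun x : ℝ => x) (Iio (lowerQuantile (μ.map X) α)) (μ.map X) := by
    rw [IntegrableOn, Measure.restrict_map_of_aemeasurable hX measurableSet_Iio,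
      integrable_map_measure hid (hX.mono_measure Measure.restrict_le_self)]
    exact hXa
  rw [setIntegral_comp_lowerQuantile hα₀ hα htail, setIntegral_map measurableSet_Iio hid hX,
    map_measureReal_apply_of_aemeasurable hX measurableSet_Iio, smul_eq_mul]
  rfl

end RandomVariable

theorem avar_extreme_value_general {Ω : Type*} [MeasurableSpace Ω]
    (μ : Measure Ω) [IsFiniteMeasure μ]
    (X : Ω → ℝ) (hXmeas : AEMeasurable X μ) (hXneg : Integrable (fun ω => (X ω)⁻) μ)
    (α : ℝ) (hα₀ : 0 < α) (hα : ∃ s, α ≤ (μ {ω | X ω ≤ s}).toReal)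
    (q : ℝ) (hq : q = sInf {s : ℝ | α ≤ (μ {ω | X ω ≤ s}).toReal})
    (ε : ℝ)
    (hε : ε = if (μ {ω | X ω = q}).toReal = 0 then 0
              else (α - (μ {ω | X ω < q}).toReal) / (μ {ω | X ω = q}).toReal)
    (Zstar : Ω → ℝ)
    (hZstar : Zstar = fun ω => (1 / α) * (({ω | X ω < q} : Set Ω).indicator 1 ω
                + ε * ({ω | X ω = q} : Set Ω).indicator 1 ω)) :
    ∫ ω, (-X ω) * Zstar ω ∂μ
      = (1 / α) * ∫ u in Ioo (0 : ℝ) α,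
          (-(sInf {s : ℝ | u ≤ (μ {ω | X ω ≤ s}).toReal})) := by
  set ν := μ.map X
  have hlaw {s : Set ℝ} (hs : MeasurableSet s) : μ.real (X ⁻¹' s) = ν.real s :=
    (map_measureReal_apply_of_aemeasurable hXmeas hs).symm
  have hIic (s : ℝ) : (μ {ω | X ω ≤ s}).toReal = ν.real (Iic s) := hlaw measurableSet_Iic
  have hIio : μ.real {ω | X ω < q} = ν.real (Iio q) := hlaw measurableSet_Iio
  have hsingleton : μ.real {ω | X ω = q} = ν.real {q} := hlaw (measurableSet_singleton q)
  simp only [hIic] at hα hq ⊢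
  change q = lowerQuantile ν α at hq
  have hatom : ε * μ.real {ω | X ω = q} = α - μ.real {ω | X ω < q} := by
    have hdiv : ε = (α - μ.real {ω | X ω < q}) / μ.real {ω | X ω = q} := by
      rw [hε, measureReal_def, measureReal_def, ite_eq_right_iff]
      exact fun h => by rw [h, div_zero]
    rw [hdiv, hIio, hsingleton, hq, sub_div_mul_measureReal_singleton_lowerQuantile hα₀ hα]
  have htail := integrableOn_setOf_lt_of_integrable_negPart hXmeas hXneg q
  calc ∫ ω, (-X ω) * Zstar ω ∂μ
      = (1 / α) * -∫ ω, X ω * ({ω | X ω < q}.indicator 1 ω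
          + ε * {ω | X ω = q}.indicator 1 ω) ∂μ := by
        rw [← integral_neg, ← integral_const_mul, hZstar]
        exact integral_congr_ae (ae_of_all _ fun _ => by ring)
    _ = (1 / α) * -(∫ ω in {ω | X ω < q}, X ω ∂μ + (α - μ.real {ω | X ω < q}) * q) := by
        rw [integral_mul_indicator_lt_add_indicator_eq hXmeas htail, hatom]
    _ = (1 / α) * ∫ u in Ioo 0 α, -lowerQuantile ν u := by
        subst hq
        rw [integral_neg, ← integral_Ioc_eq_integral_Ioo,
          setIntegral_lowerQuantile_map hXmeas hα₀ hα htail]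

/-- Theorem A.7 (part 3): the extreme expected loss equals the Average Value at Risk,
i.e. the tail average of the lower quantiles:
`∫ (−X)·Z* dμ = (1/α) ∫_{(0,α)} (−q⁻_u(X)) du`. -/
theorem avar_extreme_value {Ω : Type*} [MeasurableSpace Ω]
    (μ : Measure Ω) [IsProbabilityMeasure μ]
    (X : Ω → ℝ) (hXmeas : Measurable X) (hXb : ∃ C, ∀ ω, |X ω| ≤ C)
    (α : ℝ) (hα : α ∈ Set.Ioo (0:ℝ) 1)
    (q : ℝ) (hq : q = sInf {s : ℝ | α ≤ (μ {ω | X ω ≤ s}).toReal})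
    (ε : ℝ)
    (hε : ε = if (μ {ω | X ω = q}).toReal = 0 then 0
              else (α - (μ {ω | X ω < q}).toReal) / (μ {ω | X ω = q}).toReal)
    (Zstar : Ω → ℝ)
    (hZstar : Zstar = fun ω => (1/α) * (({ω | X ω < q} : Set Ω).indicator 1 ω
                + ε * ({ω | X ω = q} : Set Ω).indicator 1 ω)) :
    ∫ ω, (-X ω) * Zstar ω ∂μ
      = (1/α) * ∫ u in Set.Ioo (0:ℝ) α,
          (-(sInf {s : ℝ | u ≤ (μ {ω | X ω ≤ s}).toReal})) := by
  obtain ⟨C, hC⟩ := hXb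
  have hXint : Integrable X μ := .of_bound hXmeas.aestronglyMeasurable C (ae_of_all _ hC)
  have hlevel : α ≤ (μ {ω | X ω ≤ C}).toReal := by
    simpa [fun ω => (le_abs_self _).trans (hC ω)] using hα.2.le
  exact avar_extreme_value_general μ X hXmeas.aemeasurable hXint.neg_part α hα.1 ⟨C, hlevel⟩
    q hq ε hε Zstar hZstar
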